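/- Let λ_W > 0, λ_H ≥ 0 and let H₀ ∈ ℝ^{d×Kn} satisfy Σ_W(H₀) ≠ 0 and Σ_B(H₀) ≠ 0. For each β > 0 let H_{1/β} be a global minimizer of the map H ↦ L(H) + (β/(2Kn))‖H − H₀‖_F². Then there exists a constant C = C(H₀) > 0 such that for all β > C one has tr(Σ_B(H_{1/β})) > 0 and ÑC₁(H_{1/β}) < ÑC₁(H₀). -/

import Mathlib

open Matrix Filter
open scoped BigOperators

noncomputable section

variable {K n d : ℕ}

/-- The one-hot label matrix `Y = I_K ⊗ 1_nᵀ`: columns are indexed by class/sample pairs. -/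
def Ymat (K n : ℕ) : Matrix (Fin K) (Fin K × Fin n) ℝ :=
  Matrix.of fun k p => if p.1 = k then 1 else 0

/-- Squared Frobenius norm. -/
def frobSq {m p : Type*} [Fintype m] [Fintype p] (M : Matrix m p ℝ) : ℝ :=
  ∑ i, ∑ j, (M i j) ^ 2

/-- Frobenius norm. -/
def frobNorm {m p : Type*} [Fintype m] [Fintype p] (M : Matrix m p ℝ) : ℝ :=
  Real.sqrt (frobSq M)

/-- The unconstrained-features objective `g`. -/
def g (lW lH : ℝ) (W : Matrix (Fin K) (Fin d) ℝ)
    (H : Matrix (Fin d) (Fin K × Fin n) ℝ) : ℝ :=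
  (1 / (2 * (K : ℝ) * n)) * frobSq (W * H - Ymat K n) +
    (lW / (2 * (K : ℝ))) * frobSq W + (lH / (2 * (K : ℝ) * n)) * frobSq H

/-- Class means. -/
def classMean (H : Matrix (Fin d) (Fin K × Fin n) ℝ) (k : Fin K) : Fin d → ℝ :=
  fun a => (1 / (n : ℝ)) * ∑ i, H a (k, i)

/-- Global mean. -/
def globalMean (H : Matrix (Fin d) (Fin K × Fin n) ℝ) : Fin d → ℝ :=
  fun a => (1 / ((K : ℝ) * n)) * ∑ p, H a p

/-- Matrix of class means `H̄ ∈ ℝ^{d×K}`. -/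
def Hbar (H : Matrix (Fin d) (Fin K × Fin n) ℝ) : Matrix (Fin d) (Fin K) ℝ :=
  Matrix.of fun a k => classMean H k a

/-- `H̄ ⊗ 1_nᵀ`: the matrix whose n columns of class k all equal the class mean. -/
def HbarSpread (H : Matrix (Fin d) (Fin K × Fin n) ℝ) :
    Matrix (Fin d) (Fin K × Fin n) ℝ :=
  Matrix.of fun a p => classMean H p.1 a

/-- Within-class covariance. -/
def SigmaW (H : Matrix (Fin d) (Fin K × Fin n) ℝ) : Matrix (Fin d) (Fin d) ℝ :=
  Matrix.of fun a b =>
    (1 / ((K : ℝ) * n)) * ∑ p : Fin K × Fin n,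
      (H a p - classMean H p.1 a) * (H b p - classMean H p.1 b)

/-- Between-class covariance. -/
def SigmaB (H : Matrix (Fin d) (Fin K × Fin n) ℝ) : Matrix (Fin d) (Fin d) ℝ :=
  Matrix.of fun a b =>
    (1 / (K : ℝ)) * ∑ k : Fin K,
      (classMean H k a - globalMean H a) * (classMean H k b - globalMean H b)

/-- Non-centered total covariance. -/
def SigmaTtil (H : Matrix (Fin d) (Fin K × Fin n) ℝ) : Matrix (Fin d) (Fin d) ℝ :=
  (1 / ((K : ℝ) * n)) • (H * Hᵀ)

/-- Non-centered between-class covariance. -/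
def SigmaBtil (H : Matrix (Fin d) (Fin K × Fin n) ℝ) : Matrix (Fin d) (Fin d) ℝ :=
  Matrix.of fun a b => (1 / (K : ℝ)) * ∑ k : Fin K, classMean H k a * classMean H k b

/-- The closed-form optimal last-layer weights `W*(H)`. -/
def Wstar (lW : ℝ) (H : Matrix (Fin d) (Fin K × Fin n) ℝ) :
    Matrix (Fin K) (Fin d) ℝ :=
  Ymat K n * Hᵀ * (H * Hᵀ + ((n : ℝ) * lW) • (1 : Matrix (Fin d) (Fin d) ℝ))⁻¹

/-- The central-path loss `L(H)`. -/
def Lcp (lW lH : ℝ) (H : Matrix (Fin d) (Fin K × Fin n) ℝ) : ℝ :=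
  (1 / (2 * (K : ℝ) * n)) * frobSq (Wstar lW H * H - Ymat K n) +
    (lW / (2 * (K : ℝ))) * frobSq (Wstar lW H) +
    (lH / (2 * (K : ℝ) * n)) * frobSq H

/-- `A(H) = Σ̃_T(H) + (λ_W/K) I`. -/
def Amat (lW : ℝ) (H : Matrix (Fin d) (Fin K × Fin n) ℝ) : Matrix (Fin d) (Fin d) ℝ :=
  SigmaTtil H + (lW / (K : ℝ)) • 1

/-- The gradient of the central-path loss w.r.t. the Frobenius inner product. -/
def gradL (lW lH : ℝ) (H : Matrix (Fin d) (Fin K × Fin n) ℝ) :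
    Matrix (Fin d) (Fin K × Fin n) ℝ :=
  (1 / ((K : ℝ) ^ 2 * n)) •
    ((Amat lW H)⁻¹ * (H - HbarSpread H)
      - (Amat lW H)⁻¹ * (SigmaW H + (lW / (K : ℝ)) • 1) * (Amat lW H)⁻¹ * H
      + (lH * (K : ℝ)) • H)

/-- NC1 metric. -/
def NC1til (H : Matrix (Fin d) (Fin K × Fin n) ℝ) : ℝ :=
  (SigmaW H).trace / (SigmaB H).trace

def ip {m p : Type*} [Fintype m] [Fintype p] (A B : Matrix m p ℝ) : ℝ := ∑ i, ∑ j, A i j * B i j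

section ipl
variable {m p q : Type*} [Fintype m] [Fintype p] [Fintype q]

lemma ip_self (A : Matrix m p ℝ) : ip A A = frobSq A := by
  simp [ip, frobSq, sq]
lemma ip_comm (A B : Matrix m p ℝ) : ip A B = ip B A := by
  simp [ip, mul_comm]
lemma ip_add_left (A B C : Matrix m p ℝ) : ip (A + B) C = ip A C + ip B C := by
  simp [ip, add_mul, Finset.sum_add_distrib]
lemma ip_smul_left (c : ℝ) (A C : Matrix m p ℝ) : ip (c • A) C = c * ip A C := by
  simp [ip, mul_assoc, Finset.mul_sum]
lemma ip_neg_left (A C : Matrix m p ℝ) : ip (-A) C = - ip A C := by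
  simp [ip]
lemma ip_sub_left (A B C : Matrix m p ℝ) : ip (A - B) C = ip A C - ip B C := by
  simp [ip, sub_mul, Finset.sum_sub_distrib]
lemma ip_add_right (A B C : Matrix m p ℝ) : ip C (A + B) = ip C A + ip C B := by
  simp only [ip_comm C, ip_add_left]
lemma ip_sub_right (A B C : Matrix m p ℝ) : ip C (A - B) = ip C A - ip C B := by
  simp only [ip_comm C, ip_sub_left]
lemma ip_smul_right (c : ℝ) (A C : Matrix m p ℝ) : ip C (c • A) = c * ip C A := by
  simp only [ip_comm C, ip_smul_left]
lemma ip_trace (A B : Matrix m p ℝ) : ip A B = (A * Bᵀ).trace := by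
  simp [ip, Matrix.trace, Matrix.mul_apply]
lemma ip_mul_l (A : Matrix m p ℝ) (B : Matrix p q ℝ) (C : Matrix m q ℝ) :
    ip (A * B) C = ip B (Aᵀ * C) := by
  rw [ip_trace, ip_trace, Matrix.transpose_mul, Matrix.transpose_transpose, Matrix.mul_assoc,
    Matrix.trace_mul_comm, Matrix.mul_assoc]
lemma ip_mul_r (A : Matrix m p ℝ) (B : Matrix p q ℝ) (C : Matrix m q ℝ) :
    ip (A * B) C = ip A (C * Bᵀ) := by
  rw [ip_trace, ip_trace, Matrix.transpose_mul, Matrix.transpose_transpose, Matrix.mul_assoc]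
lemma frobSq_nonneg (A : Matrix m p ℝ) : 0 ≤ frobSq A := by
  unfold frobSq; positivity
lemma frobSq_eq_zero {A : Matrix m p ℝ} (h : frobSq A = 0) : A = 0 := by
  unfold frobSq at h
  ext i j
  rw [Finset.sum_eq_zero_iff_of_nonneg (fun _ _ => by positivity)] at h
  have := h i (Finset.mem_univ _)
  rw [Finset.sum_eq_zero_iff_of_nonneg (fun _ _ => by positivity)] at this
  simpa using this j (Finset.mem_univ _)
lemma frobSq_add (A B : Matrix m p ℝ) : frobSq (A + B) = frobSq A + 2 * ip A B + frobSq B := by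
  simp only [← ip_self, ip_add_left, ip_add_right, ip_comm B A]; ring
lemma frobSq_sub (A B : Matrix m p ℝ) : frobSq (A - B) = frobSq A - 2 * ip A B + frobSq B := by
  simp only [← ip_self, ip_sub_left, ip_sub_right, ip_comm B A]; ring
lemma frobSq_smul (c : ℝ) (A : Matrix m p ℝ) : frobSq (c • A) = c ^ 2 * frobSq A := by
  simp only [← ip_self, ip_smul_left, ip_smul_right]; ring
end ipl

/-- averaging -/
def Hb (H : Matrix (Fin d) (Fin K × Fin n) ℝ) : Matrix (Fin d) (Fin K) ℝ :=
  (1 / (n : ℝ)) • (H * (Ymat K n)ᵀ)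
def Cm (K : ℕ) : Matrix (Fin K) (Fin K) ℝ := 1 - Matrix.of fun _ _ => 1 / (K : ℝ)
def Qm (K n : ℕ) : Matrix (Fin K × Fin n) (Fin K × Fin n) ℝ :=
  1 - (1 / (n : ℝ)) • ((Ymat K n)ᵀ * Ymat K n)

lemma YYt (K n : ℕ) : Ymat K n * (Ymat K n)ᵀ = (n : ℝ) • 1 := by
  ext i j
  simp only [Matrix.mul_apply, Ymat, Matrix.transpose_apply, Matrix.of_apply, Matrix.smul_apply,
    Matrix.one_apply, Fintype.sum_prod_type, smul_eq_mul]
  by_cases h : i = j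
  · subst h; simp
  · have h' : ¬ j = i := fun e => h e.symm
    simp [h, h']

lemma YQ (hn : 0 < n) : Ymat K n * Qm K n = 0 := by
  have : (n : ℝ) ≠ 0 := by positivity
  rw [Qm, Matrix.mul_sub, Matrix.mul_smul, ← Matrix.mul_assoc, YYt]
  simp [smul_smul, this]

lemma Qt : (Qm K n)ᵀ = Qm K n := by simp [Qm, Matrix.transpose_sub, Matrix.transpose_mul]

lemma QQ (hn : 0 < n) : Qm K n * Qm K n = Qm K n := by
  conv_lhs => enter [1]; rw [Qm]
  rw [Matrix.sub_mul, Matrix.smul_mul, Matrix.mul_assoc, YQ hn]; simp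

lemma Ct : (Cm K)ᵀ = Cm K := by
  ext i j; simp [Cm, Matrix.one_apply, eq_comm]

lemma Hb_apply (H : Matrix (Fin d) (Fin K × Fin n) ℝ) (a k) : Hb H a k = classMean H k a := by
  simp [Hb, classMean, Matrix.mul_apply, Ymat, Fintype.sum_prod_type]
  left
  rw [Finset.sum_comm]; simp

lemma HQ_apply (H : Matrix (Fin d) (Fin K × Fin n) ℝ) (a q) :
    (H * Qm K n) a q = H a q - classMean H q.1 a := by
  have : H * Qm K n = H - Hb H * Ymat K n := by
    simp [Qm, Hb, Matrix.mul_sub, Matrix.mul_assoc]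
  rw [this, Matrix.sub_apply, Matrix.mul_apply]
  simp [Hb_apply, Ymat]

lemma HbC_apply (H : Matrix (Fin d) (Fin K × Fin n) ℝ) (a k) :
    (Hb H * Cm K) a k = classMean H k a - globalMean H a := by
  rw [Cm, Matrix.mul_sub, Matrix.mul_one, Matrix.sub_apply, Matrix.mul_apply, Hb_apply]
  simp only [Hb_apply, globalMean, classMean, Matrix.of_apply, Fintype.sum_prod_type,
    ← Finset.sum_mul, ← Finset.mul_sum]
  congr 1
  ring

lemma trW (H : Matrix (Fin d) (Fin K × Fin n) ℝ) :
    (SigmaW H).trace = (1 / ((K : ℝ) * n)) * frobSq (H * Qm K n) := by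
  simp only [Matrix.trace, SigmaW, frobSq, HQ_apply, Matrix.diag_apply, Matrix.of_apply,
    Finset.mul_sum, sq]

lemma trB (H : Matrix (Fin d) (Fin K × Fin n) ℝ) :
    (SigmaB H).trace = (1 / (K : ℝ)) * frobSq (Hb H * Cm K) := by
  simp only [Matrix.trace, SigmaB, frobSq, HbC_apply, Matrix.diag_apply, Matrix.of_apply,
    Finset.mul_sum, sq]

lemma HQ_ne {H : Matrix (Fin d) (Fin K × Fin n) ℝ} (h : SigmaW H ≠ 0) : H * Qm K n ≠ 0 := by
  intro h0; apply h; ext a b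
  simp [SigmaW, ← HQ_apply, h0]

lemma HbC_ne {H : Matrix (Fin d) (Fin K × Fin n) ℝ} (h : SigmaB H ≠ 0) : Hb H * Cm K ≠ 0 := by
  intro h0; apply h; ext a b
  simp [SigmaB, ← HbC_apply, h0]

lemma normal_eq (hn : 0 < n) {lW : ℝ} (hlW : 0 < lW) (H : Matrix (Fin d) (Fin K × Fin n) ℝ) :
    Wstar lW H * (H * Hᵀ + ((n : ℝ) * lW) • (1 : Matrix (Fin d) (Fin d) ℝ)) = Ymat K n * Hᵀ := by
  have hp : (H * Hᵀ + ((n : ℝ) * lW) • (1 : Matrix (Fin d) (Fin d) ℝ)).PosDef := by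
    apply Matrix.PosDef.posSemidef_add
    · simpa using Matrix.posSemidef_self_mul_conjTranspose H
    · exact Matrix.PosDef.one.smul (by positivity)
  rw [Wstar, Matrix.nonsing_inv_mul_cancel_right]
  exact (Matrix.isUnit_iff_isUnit_det _).1 hp.isUnit

/-- ridge optimality -/
lemma ridge (hK : 0 < K) (hn : 0 < n) {lW lH : ℝ} (hlW : 0 < lW)
    (H : Matrix (Fin d) (Fin K × Fin n) ℝ) (V : Matrix (Fin K) (Fin d) ℝ) :
    Lcp lW lH H ≤ g lW lH V H := by
  have hne := normal_eq hn hlW H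
  unfold Lcp g
  set W := Wstar lW H
  obtain ⟨D, rfl⟩ : ∃ D, V = W + D := ⟨V - W, by simp⟩
  have e1 : (W + D) * H - Ymat K n = (W * H - Ymat K n) + D * H := by rw [Matrix.add_mul]; abel
  have e2 : (W * H - Ymat K n) * Hᵀ = -(((n : ℝ) * lW) • W) := by
    rw [Matrix.sub_mul, ← hne, Matrix.mul_add, Matrix.mul_assoc]; simp
  rw [e1, frobSq_add, frobSq_add, ip_comm _ (D * H), ip_mul_r, e2]
  have e3 : ip D (-(((n : ℝ) * lW) • W)) = - (n * lW * ip W D) := by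
    rw [ip_comm, ip_neg_left, ip_smul_left]
  rw [e3]
  have h1 := frobSq_nonneg (D * H)
  have h2 := frobSq_nonneg D
  have hK' : (0 : ℝ) < K := by positivity
  have hn' : (0 : ℝ) < n := by positivity
  have : 0 ≤ 1 / (2 * (K : ℝ) * n) * frobSq (D * H) + lW / (2 * K) * frobSq D := by positivity
  have e4 : 1 / (2 * (K : ℝ) * n) * (2 * -(n * lW * ip W D)) + lW / (2 * K) * (2 * ip W D) = 0 := by
    field_simp; ring
  linarith

lemma station (hK : 0 < K) (hn : 0 < n) {lW lH β : ℝ} (hlW : 0 < lW) (hlH : 0 ≤ lH) (hβ : 0 < β)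
    (H H₀ : Matrix (Fin d) (Fin K × Fin n) ℝ)
    (hmin : ∀ H' : Matrix (Fin d) (Fin K × Fin n) ℝ,
        Lcp lW lH H + (β / (2 * (K : ℝ) * n)) * frobSq (H - H₀)
          ≤ Lcp lW lH H' + (β / (2 * (K : ℝ) * n)) * frobSq (H' - H₀)) :
    (Wstar lW H)ᵀ * (Wstar lW H * H - Ymat K n) + lH • H + β • (H - H₀) = 0 := by
  have hg : Lcp lW lH H = g lW lH (Wstar lW H) H := rfl
  set W := Wstar lW H
  set G := Wᵀ * (W * H - Ymat K n) + lH • H + β • (H - H₀) with hG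
  have hK' : (0 : ℝ) < K := by positivity
  have hn' : (0 : ℝ) < n := by positivity
  set c := frobSq (W * G) + lH * frobSq G + β * frobSq G with hc
  have hG0 := frobSq_nonneg G
  have hc0 : 0 ≤ c := by have := frobSq_nonneg (W * G); positivity
  have key : ∀ s : ℝ, 0 ≤ s ^ 2 * c - 2 * s * frobSq G := by
    intro s
    have h1 := (hmin (H - s • G)).trans (add_le_add_left (ridge hK hn hlW (H - s • G) W) _)
    rw [hg] at h1
    unfold g at h1
    have e1 : W * (H - s • G) - Ymat K n = (W * H - Ymat K n) - s • (W * G) := by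
      rw [Matrix.mul_sub, Matrix.mul_smul]; abel
    have e2 : H - s • G - H₀ = (H - H₀) - s • G := by abel
    rw [e1, e2] at h1
    simp only [frobSq_sub _ (s • _), frobSq_smul, ip_smul_right] at h1
    have e3 : ip (W * H - Ymat K n) (W * G) + lH * ip H G + β * ip (H - H₀) G = frobSq G := by
      rw [ip_comm, ip_mul_l, ip_comm, ← ip_smul_left, ← ip_smul_left, ← ip_add_left, ← ip_add_left,
        ← hG, ip_self]
    rw [← e3, hc]
    have hN : 0 < 1 / (2 * (K : ℝ) * n) := by positivity
    have a1 : lH / (2 * (K : ℝ) * n) = 1 / (2 * (K : ℝ) * n) * lH := by ring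
    have a2 : β / (2 * (K : ℝ) * n) = 1 / (2 * (K : ℝ) * n) * β := by ring
    rw [a1, a2] at h1
    refine nonneg_of_mul_nonneg_right ?_ hN
    linarith
  apply frobSq_eq_zero
  have h := key (frobSq G / (c + 1))
  have hcp : 0 < c + 1 := by linarith
  have e : (frobSq G / (c + 1)) ^ 2 * c - 2 * (frobSq G / (c + 1)) * frobSq G
      = - (frobSq G ^ 2 * (c + 2)) / (c + 1) ^ 2 := by field_simp; ring
  rw [e, le_div_iff₀ (by positivity)] at h
  have : frobSq G ^ 2 = 0 := by nlinarith [sq_nonneg (frobSq G)]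
  exact pow_eq_zero_iff (two_ne_zero) |>.1 this

lemma Hb_add (A B : Matrix (Fin d) (Fin K × Fin n) ℝ) : Hb (A + B) = Hb A + Hb B := by
  simp [Hb, Matrix.add_mul]
lemma Hb_smul (c : ℝ) (A : Matrix (Fin d) (Fin K × Fin n) ℝ) : Hb (c • A) = c • Hb A := by
  simp [Hb, smul_comm c]
lemma Hb_Y (hn : 0 < n) : (1 / (n : ℝ)) • (Ymat K n * (Ymat K n)ᵀ) = 1 := by
  have : (n : ℝ) ≠ 0 := by positivity
  simp [YYt, smul_smul, this]

lemma HHt (hn : 0 < n) (H : Matrix (Fin d) (Fin K × Fin n) ℝ) :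
    H * Hᵀ = (n : ℝ) • (Hb H * (Hb H)ᵀ) + (H * Qm K n) * (H * Qm K n)ᵀ := by
  have hn' : (n : ℝ) ≠ 0 := by positivity
  have : (H * Qm K n) * (H * Qm K n)ᵀ = H * Qm K n * Hᵀ := by
    rw [Matrix.transpose_mul, Qt, Matrix.mul_assoc, ← Matrix.mul_assoc (Qm K n), QQ hn,
      Matrix.mul_assoc]
  rw [this, Qm, Hb]
  simp only [Matrix.mul_sub, Matrix.sub_mul, Matrix.transpose_smul, Matrix.transpose_mul,
    Matrix.transpose_transpose, Matrix.smul_mul, Matrix.mul_smul, smul_smul, Matrix.mul_assoc,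
    Matrix.mul_one]
  rw [show (n : ℝ) * (1 / n * (1 / n)) = 1 / n by field_simp]
  abel

/-- The core inequality at the minimizer. -/
lemma core (hn : 0 < n) {lW a : ℝ} (hlW : 0 < lW) (ha : 1 / lW < 2 * a)
    (H : Matrix (Fin d) (Fin K × Fin n) ℝ) (W : Matrix (Fin K) (Fin d) ℝ)
    (hW : W * (H * Hᵀ + ((n : ℝ) * lW) • (1 : Matrix (Fin d) (Fin d) ℝ)) = Ymat K n * Hᵀ) :
    (Hb H * Cm K = 0 → Wᵀ * (1 - W * Hb H) * Cm K = 0) ∧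
    (Hb H * Cm K ≠ 0 → frobSq (a • (Hb H * Cm K) - Wᵀ * (1 - W * Hb H) * Cm K)
      < a ^ 2 * frobSq (Hb H * Cm K)) := by
  have hn' : (0 : ℝ) < n := by positivity
  set M := W * Hb H with hM
  set C := Cm K
  set X := W * (H * Qm K n) with hX
  have hWb : W * (H * Hᵀ + ((n : ℝ) * lW) • (1 : Matrix (Fin d) (Fin d) ℝ))
      = (n : ℝ) • (Hb H)ᵀ := by
    rw [hW, Hb, Matrix.transpose_smul, smul_smul]
    simp [hn'.ne']
  have hYH : (n : ℝ) • Mᵀ = (n : ℝ) • (M * Mᵀ + lW • (W * Wᵀ) + (1 / (n : ℝ)) • (X * Xᵀ)) := by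
    have h1 := congrArg (· * Wᵀ) hWb
    rw [HHt hn H] at h1
    simp only [Matrix.mul_add, Matrix.add_mul, Matrix.mul_smul, Matrix.smul_mul, Matrix.mul_one] at h1
    rw [hM, hX]
    simp only [Matrix.transpose_mul, smul_add, smul_smul, Matrix.mul_assoc] at h1 ⊢
    rw [← h1]
    simp only [mul_one_div, div_self hn'.ne', one_smul]
    abel
  have hMt : Mᵀ = M * Mᵀ + lW • (W * Wᵀ) + (1 / (n : ℝ)) • (X * Xᵀ) :=
    smul_right_injective _ hn'.ne' hYH
  have hsym : Mᵀ = M := by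
    have := congrArg Matrix.transpose hMt
    simp only [Matrix.transpose_add, Matrix.transpose_mul, Matrix.transpose_smul,
      Matrix.transpose_transpose] at this
    rw [← hMt] at this
    exact this.symm
  rw [hsym] at hMt
  -- quadratic form of D
  set D := lW • (W * Wᵀ) + (1 / (n : ℝ)) • (X * Xᵀ) with hD
  have hMD : M = M * M + D := by rw [hD, ← add_assoc]; exact hMt
  have hD2 : D = M - M * M := eq_sub_of_add_eq' hMD.symm
  have hDq : ∀ Z : Matrix (Fin K) (Fin K) ℝ,
      ip Z (D * Z) = lW * frobSq (Wᵀ * Z) + (1 / (n : ℝ)) * frobSq (Xᵀ * Z) := by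
    intro Z
    rw [hD, Matrix.add_mul, ip_add_right, Matrix.smul_mul, Matrix.smul_mul, ip_smul_right,
      ip_smul_right, ← ip_self, ← ip_self, ip_mul_l Wᵀ, ip_mul_l Xᵀ]
    simp [Matrix.mul_assoc]
  have hDsym : Dᵀ = D := by rw [hD]; simp [Matrix.transpose_mul]
  have hDle : ∀ Z, lW * frobSq (Wᵀ * Z) ≤ ip Z (D * Z) := by
    intro Z; rw [hDq]
    have := frobSq_nonneg (Xᵀ * Z)
    have : 0 ≤ (1 / (n : ℝ)) * frobSq (Xᵀ * Z) := by positivity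
    linarith
  have hDnn : ∀ Z, 0 ≤ ip Z (D * Z) := by
    intro Z
    have := frobSq_nonneg (Wᵀ * Z)
    exact le_trans (by positivity) (hDle Z)
  have hWC : Hb H * C = 0 ↔ Wᵀ * C = 0 := by
    constructor
    · intro h0
      have : ip C (D * C) = 0 := by
        have : D * C = 0 := by
          have hMC : M * C = 0 := by rw [hM, Matrix.mul_assoc, h0, Matrix.mul_zero]
          rw [hD2, Matrix.sub_mul, Matrix.mul_assoc M M C, hMC]; simp
        rw [this]; simp [ip]
      have h2 := hDle C
      rw [this] at h2
      apply frobSq_eq_zero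
      exact le_antisymm (by by_contra h; push Not at h; nlinarith) (frobSq_nonneg _)
    · intro h0
      have h1 := congrArg (fun Z => Zᵀ * C) hWb
      simp only [Matrix.transpose_mul, Matrix.transpose_smul, Matrix.transpose_transpose,
        Matrix.mul_assoc, h0, Matrix.mul_zero, Matrix.smul_mul] at h1
      exact (smul_eq_zero.1 h1.symm).resolve_left hn'.ne'
  refine ⟨fun h0 => ?_, fun h0 => ?_⟩
  · have : M * C = 0 := by rw [hM, Matrix.mul_assoc, h0, Matrix.mul_zero]
    rw [Matrix.mul_assoc, Matrix.sub_mul, this, Matrix.one_mul, sub_zero, hWC.1 h0]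
  · have hpos : 0 < frobSq (Wᵀ * C) := by
      refine lt_of_le_of_ne (frobSq_nonneg _) (fun h => h0 (hWC.2 (frobSq_eq_zero h.symm)))
    set T := Wᵀ * (1 - M) * C with hT
    have hET : ip (Hb H * C) T = ip C (D * C) := by
      rw [ip_comm, hT, Matrix.mul_assoc, ip_mul_l, Matrix.transpose_transpose,
        ← Matrix.mul_assoc, ← hM, ip_comm, ip_mul_l, hsym, ← Matrix.mul_assoc]
      congr 2
      rw [Matrix.mul_sub, Matrix.mul_one]
      exact hD2.symm
    have hTle : lW * frobSq T ≤ ip C (D * C) := by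
      have h1 := hDle ((1 - M) * C)
      rw [← Matrix.mul_assoc, ← hT] at h1
      have e : ip ((1 - M) * C) (D * ((1 - M) * C))
          = ip C (D * C) - 2 * frobSq (D * C) - ip (M * C) (D * (M * C)) := by
        rw [← ip_self (D * C), ip_mul_l, ip_mul_l D, ip_mul_l M, hDsym, Matrix.transpose_sub, hsym,
          Matrix.transpose_one]
        rw [two_mul, ← sub_sub, ← ip_sub_right, ← ip_sub_right, ← ip_sub_right]
        congr 1
        have : (1 - M) * D * (1 - M) = D - D * D - D * D - M * D * M := by
          rw [hD2]; noncomm_ring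
        simp only [← Matrix.mul_assoc, ← Matrix.sub_mul]
        rw [this]
      have := frobSq_nonneg (D * C)
      have := hDnn (M * C)
      linarith
    have hcc : 0 < ip C (D * C) := lt_of_lt_of_le (by positivity) (hDle C)
    rw [frobSq_sub, frobSq_smul, ip_smul_left, hET]
    have hTle' : frobSq T ≤ (1 / lW) * ip C (D * C) := by
      rw [div_mul_eq_mul_div, le_div_iff₀ hlW]; linarith
    nlinarith

/-- Corollary: decrease of within-class variability: if `Σ_W(H₀) ≠ 0` and
`Σ_B(H₀) ≠ 0`, then there is `C = C(H₀) > 0` such that for every `β > C`, any global minimizer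
`H_{1/β}` of `H ↦ L(H) + (β/(2Kn))‖H − H₀‖_F²` satisfies `tr Σ_B(H_{1/β}) > 0` and
`ÑC₁(H_{1/β}) < ÑC₁(H₀)`. -/
theorem nc1_decreases_for_proximal_minimizer
    (K n d : ℕ) (hK : 0 < K) (hn : 0 < n) (hdK : K ≤ d)
    (lW lH : ℝ) (hlW : 0 < lW) (hlH : 0 ≤ lH)
    (H₀ : Matrix (Fin d) (Fin K × Fin n) ℝ)
    (hW0 : SigmaW H₀ ≠ 0) (hB0 : SigmaB H₀ ≠ 0)
    (Hm : ℝ → Matrix (Fin d) (Fin K × Fin n) ℝ)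
    (hmin : ∀ β : ℝ, 0 < β →
      ∀ H' : Matrix (Fin d) (Fin K × Fin n) ℝ,
        Lcp lW lH (Hm β) + (β / (2 * (K : ℝ) * n)) * frobSq (Hm β - H₀)
          ≤ Lcp lW lH H' + (β / (2 * (K : ℝ) * n)) * frobSq (H' - H₀)) :
    ∃ C : ℝ, 0 < C ∧ ∀ β : ℝ, C < β →
      0 < (SigmaB (Hm β)).trace ∧ NC1til (Hm β) < NC1til H₀ := by
  have hK' : (0 : ℝ) < K := by positivity
  have hn' : (0 : ℝ) < n := by positivity
  refine ⟨1 / lW, by positivity, fun β hβ => ?_⟩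
  have hb : 0 < β := lt_trans (by positivity) hβ
  have hst := station hK hn hlW hlH hb (Hm β) H₀ (hmin β hb)
  have hne := normal_eq hn hlW (Hm β)
  generalize Hm β = H at hst hne
  generalize Wstar lW H = W at hst hne
  set a := β + lH with ha
  have ha0 : 0 < a := by positivity
  have hcore := core (a := a) hn hlW (by linarith) H W hne
  have h0 : β • H₀ = a • H + Wᵀ * (W * H - Ymat K n) := by
    rw [smul_sub] at hst
    have := sub_eq_zero.1 (show a • H + Wᵀ * (W * H - Ymat K n) - β • H₀ = 0 by
      rw [← hst, ha, add_smul]; abel)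
    exact this.symm
  -- within-class part
  have hQ : β • (H₀ * Qm K n) = a • (H * Qm K n) + Wᵀ * (W * (H * Qm K n)) := by
    rw [← Matrix.smul_mul, h0, Matrix.add_mul, Matrix.mul_assoc, Matrix.sub_mul, YQ hn, sub_zero,
      Matrix.smul_mul, Matrix.mul_assoc]
  have hQn : a ^ 2 * frobSq (H * Qm K n) ≤ β ^ 2 * frobSq (H₀ * Qm K n) := by
    rw [← frobSq_smul β, hQ, frobSq_add, frobSq_smul, ip_smul_left, ip_comm, ip_mul_l,
      Matrix.transpose_transpose, ip_self]
    have h1 := frobSq_nonneg (W * (H * Qm K n))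
    have h2 := frobSq_nonneg (Wᵀ * (W * (H * Qm K n)))
    have : 0 ≤ 2 * (a * frobSq (W * (H * Qm K n))) := by positivity
    linarith
  -- between-class part
  have hC : β • (Hb H₀ * Cm K) = a • (Hb H * Cm K) - Wᵀ * (1 - W * Hb H) * Cm K := by
    rw [← Matrix.smul_mul, ← Hb_smul, h0, Hb_add, Hb_smul, Matrix.add_mul, Matrix.smul_mul,
      sub_eq_add_neg (a • (Hb H * Cm K)), ← Matrix.neg_mul]
    congr 2
    have h1 := Hb_Y (K := K) hn
    rw [Hb, Matrix.mul_assoc, Matrix.sub_mul, ← Matrix.mul_smul, smul_sub, h1, Hb,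
      Matrix.mul_assoc, ← Matrix.mul_smul, ← Matrix.mul_neg, neg_sub]
  have hB0' := HbC_ne hB0
  have hE : Hb H * Cm K ≠ 0 := by
    intro h
    rw [hcore.1 h, h, smul_zero, sub_zero] at hC
    exact hB0' ((smul_eq_zero.1 hC).resolve_left hb.ne')
  have hCn := hcore.2 hE
  rw [← hC, frobSq_smul] at hCn
  have pos : ∀ {p : Type} [Fintype p] {A : Matrix (Fin d) p ℝ}, A ≠ 0 → 0 < frobSq A :=
    fun h => lt_of_le_of_ne (frobSq_nonneg _) (fun h' => h (frobSq_eq_zero h'.symm))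
  have p1 := pos hE
  have p2 := pos hB0'
  have p3 := pos (HQ_ne hW0)
  have p4 := frobSq_nonneg (H * Qm K n)
  refine ⟨by rw [trB]; positivity, ?_⟩
  rw [NC1til, NC1til, trB, trB, trW, trW, div_lt_div_iff₀ (by positivity) (by positivity)]
  generalize frobSq (H * Qm K n) = w at *
  generalize frobSq (H₀ * Qm K n) = w0 at *
  generalize frobSq (Hb H * Cm K) = b at *
  generalize frobSq (Hb H₀ * Cm K) = b0 at *
  have hk : w * b0 < w0 * b := by
    have s1 : (a ^ 2 * w) * (β ^ 2 * b0) ≤ (β ^ 2 * w0) * (β ^ 2 * b0) :=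
      mul_le_mul_of_nonneg_right hQn (by positivity)
    have s2 : (β ^ 2 * w0) * (β ^ 2 * b0) < (β ^ 2 * w0) * (a ^ 2 * b) :=
      mul_lt_mul_of_pos_left hCn (by positivity)
    have s3 : 0 < a ^ 2 * β ^ 2 := by positivity
    refine lt_of_mul_lt_mul_left ?_ s3.le
    linarith
  have s4 : 0 < 1 / ((K : ℝ) * n) * (1 / K) := by positivity
  have := mul_lt_mul_of_pos_left hk s4
  linarith

end
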